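/- arXiv:2210.05796 — 2 statements merged into one kernel-verified Lean document; each statement's English description precedes it below -/
import Mathlib

section
/- Constancy of the conformal factor in dimension at least 4: let n ≥ 2, let J denote the standard symplectic matrix on ℝ^{2n} (block form [[0, I_n], [−I_n, 0]]), let f : ℝ^{2n} → ℝ^{2n} be a C² map, and let λ : ℝ^{2n} → ℝ be a function such that Df(x)ᵀ·J·Df(x) = λ(x)·J for every x ∈ ℝ^{2n}, with Df(x) invertible for every x. Then λ is constant on ℝ^{2n}. -/
open Matrix

/-- The standard symplectic matrix `J = [[0, Iₙ], [-Iₙ, 0]]` on `ℝ^{2n}`. -/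
def stdSymplecticMatrix (n : ℕ) : Matrix (Fin n ⊕ Fin n) (Fin n ⊕ Fin n) ℝ :=
  Matrix.fromBlocks 0 1 (-1) 0

/-!
A conformal factor `λ` satisfies `f^* η = λ ω` with `ω` and `η` closed. Pullback commutes with the
exterior derivative, so `0 = d(f^* η) = d(λ ω) = dλ ∧ ω`. Evaluating `dλ ∧ ω = 0` on `(e, v, w)`
with `dλ(e) = 1` gives `ω = dλ ∧ ω(e, ·)`, so that `ω` has rank at most two wherever `dλ ≠ 0`. A
form of rank greater than two therefore forces `dλ = 0`.
-/

open ContinuousAlternatingMap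

section TwoForms

variable {𝕜 E : Type*} [NontriviallyNormedField 𝕜] [NormedAddCommGroup E] [NormedSpace 𝕜 E]

theorem alternatizeUncurryFin_smulRight_apply (α : E →L[𝕜] 𝕜) (ω : E [⋀^Fin 2]→L[𝕜] 𝕜)
    (u v w : E) :
    alternatizeUncurryFin (α.smulRight ω) ![u, v, w] =
      α u * ω ![v, w] - α v * ω ![u, w] + α w * ω ![u, v] := by
  have h₁ : Fin.removeNth 1 ![u, v, w] = ![u, w] := by
    ext i; fin_cases i <;> rfl
  have h₂ : Fin.removeNth 2 ![u, v, w] = ![u, v] := by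
    ext i; fin_cases i <;> rfl
  simp [alternatizeUncurryFin_apply, Fin.sum_univ_three, h₁, h₂, sub_eq_add_neg]

theorem rank_curryLeft_le_two_of_wedge_eq_zero {α : E →L[𝕜] 𝕜} {ω : E [⋀^Fin 2]→L[𝕜] 𝕜}
    (hα : α ≠ 0) (hαω : alternatizeUncurryFin (α.smulRight ω) = 0) :
    ω.curryLeft.toLinearMap.rank ≤ 2 := by
  obtain ⟨e, he⟩ : ∃ e, α e = 1 := α.toLinearMap.surjective
    (mt (fun h ↦ ContinuousLinearMap.coe_injective h) hα) 1
  have hω (v w : E) : ω ![v, w] = α v * ω ![e, w] - ω ![e, v] * α w := by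
    have h := alternatizeUncurryFin_smulRight_apply α ω e v w
    rw [hαω, he, ContinuousAlternatingMap.coe_zero, Pi.zero_apply] at h
    linear_combination -h
  have hrange : LinearMap.range ω.curryLeft.toLinearMap ≤
      Submodule.span 𝕜 {ω.curryLeft e, ofSubsingleton 𝕜 E 𝕜 (0 : Fin 1) α} := by
    rintro _ ⟨v, rfl⟩
    refine Submodule.mem_span_pair.2 ⟨α v, -ω ![e, v], ?_⟩
    ext m
    have hm : m = ![m 0] := by ext i; fin_cases i; rfl
    rw [hm]
    simp [hω v (m 0), sub_eq_add_neg]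
  calc
    ω.curryLeft.toLinearMap.rank
      ≤ Module.rank 𝕜
          (Submodule.span 𝕜 {ω.curryLeft e, ofSubsingleton 𝕜 E 𝕜 (0 : Fin 1) α}) :=
        Submodule.rank_mono hrange
    _ ≤ 2 := (rank_span_le _).trans <| Cardinal.mk_insert_le.trans <| by
      rw [Cardinal.mk_singleton, one_add_one_eq_two]

theorem ne_zero_of_two_lt_rank_curryLeft {ω : E [⋀^Fin 2]→L[𝕜] 𝕜}
    (hω : 2 < ω.curryLeft.toLinearMap.rank) : ω ≠ 0 := by
  rintro rfl
  simp at hω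

end TwoForms

section ExteriorDerivative

variable {𝕜 E V : Type*} [NontriviallyNormedField 𝕜] [NormedAddCommGroup E] [NormedSpace 𝕜 E]
  [NormedAddCommGroup V] [NormedSpace 𝕜 V]

theorem differentiableAt_of_smul [SeparatingDual 𝕜 V] {lam : E → 𝕜} {w : E → V} {x : E}
    (hw : DifferentiableAt 𝕜 w x) (hlamw : DifferentiableAt 𝕜 (fun y ↦ lam y • w y) x)
    (hx : w x ≠ 0) : DifferentiableAt 𝕜 lam x := by
  obtain ⟨φ, hφ⟩ := SeparatingDual.exists_ne_zero (R := 𝕜) hx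
  have hφw : DifferentiableAt 𝕜 (fun y ↦ φ (w y)) x := φ.differentiableAt.comp x hw
  have hquot : DifferentiableAt 𝕜 (fun y ↦ φ (lam y • w y) / φ (w y)) x := by
    fun_prop (disch := exact hφ)
  refine hquot.congr_of_eventuallyEq ?_
  filter_upwards [hφw.continuousAt.eventually_ne hφ] with y hy
  simp [hy]

theorem extDeriv_const {k : ℕ} (ω : E [⋀^Fin k]→L[𝕜] V) (x : E) :
    extDeriv (fun _ ↦ ω) x = 0 := by
  ext v
  simp [extDeriv, alternatizeUncurryFin_apply]

theorem extDeriv_smul_of_closed {k : ℕ} {lam : E → 𝕜} {ω : E → E [⋀^Fin k]→L[𝕜] V} {x : E}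
    (hlam : DifferentiableAt 𝕜 lam x) (hω : DifferentiableAt 𝕜 ω x) (hdω : extDeriv ω x = 0) :
    extDeriv (fun y ↦ lam y • ω y) x =
      alternatizeUncurryFin ((fderiv 𝕜 lam x).smulRight (ω x)) := by
  rw [extDeriv] at hdω
  rw [extDeriv, fderiv_fun_smul hlam hω, alternatizeUncurryFin_add, alternatizeUncurryFin_smul,
    hdω, smul_zero, zero_add]

theorem fderiv_eq_zero_of_extDeriv_smul_eq_zero {lam : E → 𝕜} {ω : E → E [⋀^Fin 2]→L[𝕜] 𝕜} {x : E}
    (hlam : DifferentiableAt 𝕜 lam x) (hω : DifferentiableAt 𝕜 ω x) (hdω : extDeriv ω x = 0)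
    (hrank : 2 < (ω x).curryLeft.toLinearMap.rank)
    (hdlamω : extDeriv (fun y ↦ lam y • ω y) x = 0) : fderiv 𝕜 lam x = 0 := by
  by_contra hne
  rw [extDeriv_smul_of_closed hlam hω hdω] at hdlamω
  exact hrank.not_ge (rank_curryLeft_le_two_of_wedge_eq_zero hne hdlamω)

end ExteriorDerivative

section ConformallySymplectic

variable {𝕜 E F : Type*} [RCLike 𝕜] [NormedAddCommGroup E] [NormedSpace 𝕜 E]
  [NormedAddCommGroup F] [NormedSpace 𝕜 F]

theorem hasFDerivAt_conformal_factor_zero {f : E → F} {ω : E → E [⋀^Fin 2]→L[𝕜] 𝕜}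
    {η : F → F [⋀^Fin 2]→L[𝕜] 𝕜} {lam : E → 𝕜} {x : E} (hf : ContDiffAt 𝕜 2 f x)
    (hω : DifferentiableAt 𝕜 ω x) (hdω : extDeriv ω x = 0)
    (hrank : 2 < (ω x).curryLeft.toLinearMap.rank)
    (hη : DifferentiableAt 𝕜 η (f x)) (hdη : extDeriv η (f x) = 0)
    (hconf : (fun y ↦ (η (f y)).compContinuousLinearMap (fderiv 𝕜 f y)) =ᶠ[nhds x]
      fun y ↦ lam y • ω y) :
    HasFDerivAt lam (0 : E →L[𝕜] 𝕜) x := by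
  have hpullback : DifferentiableAt 𝕜
      (fun y ↦ (η (f y)).compContinuousLinearMap (fderiv 𝕜 f y)) x :=
    (hη.comp x (hf.differentiableAt two_ne_zero)).continuousAlternatingMapCompContinuousLinearMap
      ((hf.fderiv_right (m := 1) (by norm_num)).differentiableAt one_ne_zero)
  have hlam : DifferentiableAt 𝕜 lam x :=
    differentiableAt_of_smul hω (hpullback.congr_of_eventuallyEq hconf.symm)
      (ne_zero_of_two_lt_rank_curryLeft hrank)
  have hclosed : extDeriv (fun y ↦ lam y • ω y) x = 0 := by
    rw [← hconf.extDeriv_eq, extDeriv_pullback hη hf (by simp), hdη]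
    rfl
  exact fderiv_eq_zero_of_extDeriv_smul_eq_zero hlam hω hdω hrank hclosed ▸ hlam.hasFDerivAt

theorem conformal_factor_constant_general {U : Set E} (hU : IsOpen U) (hUc : IsPreconnected U)
    {f : E → F} (hf : ContDiffOn 𝕜 2 f U)
    {ω : E → E [⋀^Fin 2]→L[𝕜] 𝕜} (hω : ∀ x ∈ U, DifferentiableAt 𝕜 ω x)
    (hdω : ∀ x ∈ U, extDeriv ω x = 0)
    (hrank : ∀ x ∈ U, 2 < (ω x).curryLeft.toLinearMap.rank)
    {η : F → F [⋀^Fin 2]→L[𝕜] 𝕜} (hη : ∀ x ∈ U, DifferentiableAt 𝕜 η (f x))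
    (hdη : ∀ x ∈ U, extDeriv η (f x) = 0) {lam : E → 𝕜}
    (hconf : ∀ x ∈ U, (η (f x)).compContinuousLinearMap (fderiv 𝕜 f x) = lam x • ω x) :
    ∀ x ∈ U, ∀ y ∈ U, lam x = lam y := by
  have hlam (x : E) (hx : x ∈ U) : HasFDerivAt lam (0 : E →L[𝕜] 𝕜) x :=
    hasFDerivAt_conformal_factor_zero (hf.contDiffAt (hU.mem_nhds hx)) (hω x hx) (hdω x hx)
      (hrank x hx) (hη x hx) (hdη x hx) (Filter.eventually_of_mem (hU.mem_nhds hx) hconf)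
  let : NormedSpace ℝ E := .restrictScalars ℝ 𝕜 E
  exact fun x hx y hy ↦ hU.is_const_of_fderiv_eq_zero hUc
    (fun z hz ↦ (hlam z hz).differentiableAt.differentiableWithinAt)
    (fun z hz ↦ (hlam z hz).fderiv) hx hy

end ConformallySymplectic

section MatrixForms

theorem dotProduct_mulVec_self_eq_zero {R ι : Type*} [CommRing R] [NoZeroDivisors R] [CharZero R]
    [Fintype ι] {A : Matrix ι ι R} (hA : Aᵀ = -A) (u : ι → R) : u ⬝ᵥ A *ᵥ u = 0 := by
  refine self_eq_neg.1 ?_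
  calc
    u ⬝ᵥ A *ᵥ u = u ⬝ᵥ Aᵀ *ᵥ u := by
      rw [mulVec_transpose, dotProduct_mulVec, dotProduct_comm]
    _ = -(u ⬝ᵥ A *ᵥ u) := by rw [hA, neg_mulVec, dotProduct_neg]

variable {𝕜 ι κ : Type*} [RCLike 𝕜] [Fintype ι] [Fintype κ]

/-- The 2-form `(u, v) ↦ uᵀ A v` of a skew-symmetric matrix `A`. -/
def twoFormOfSkew (A : Matrix ι ι 𝕜) (hA : Aᵀ = -A) : (ι → 𝕜) [⋀^Fin 2]→L[𝕜] 𝕜 where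
  toFun v := v 0 ⬝ᵥ A *ᵥ v 1
  map_update_add' v i x y := by
    fin_cases i <;> simp [mulVec_add]
  map_update_smul' v i c x := by
    fin_cases i <;> simp [mulVec_smul]
  map_eq_zero_of_eq' v i j hij hne := by
    have h01 : v 0 = v 1 := by
      fin_cases i <;> fin_cases j <;> simp_all
    rw [h01]
    exact dotProduct_mulVec_self_eq_zero hA (v 1)
  cont := by fun_prop

theorem twoFormOfSkew_apply (A : Matrix ι ι 𝕜) (hA : Aᵀ = -A) (v : Fin 2 → ι → 𝕜) :
    twoFormOfSkew A hA v = v 0 ⬝ᵥ A *ᵥ v 1 :=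
  rfl

theorem twoFormOfSkew_compContinuousLinearMap_eq_smul {A : Matrix ι ι 𝕜} {B : Matrix κ κ 𝕜}
    (hA : Aᵀ = -A) (hB : Bᵀ = -B) {P : Matrix κ ι 𝕜} {c : 𝕜} (hP : Pᵀ * B * P = c • A) :
    (twoFormOfSkew B hB).compContinuousLinearMap P.mulVecLin.toContinuousLinearMap =
      c • twoFormOfSkew A hA := by
  ext v
  rw [compContinuousLinearMap_apply, ContinuousAlternatingMap.smul_apply, twoFormOfSkew_apply,
    twoFormOfSkew_apply]
  calc
    (P *ᵥ v 0) ⬝ᵥ B *ᵥ P *ᵥ v 1 = v 0 ⬝ᵥ (Pᵀ * B * P) *ᵥ v 1 := by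
      rw [← mulVec_mulVec, ← mulVec_mulVec, dotProduct_mulVec (v 0), vecMul_transpose]
    _ = c • (v 0 ⬝ᵥ A *ᵥ v 1) := by rw [hP, smul_mulVec, dotProduct_smul]

theorem rank_curryLeft_twoFormOfSkew [DecidableEq ι] {A : Matrix ι ι 𝕜} (hA : Aᵀ = -A)
    (hdet : IsUnit A.det) :
    (twoFormOfSkew A hA).curryLeft.toLinearMap.rank = Fintype.card ι := by
  have hinj : Function.Injective (twoFormOfSkew A hA).curryLeft.toLinearMap := by
    refine (injective_iff_map_eq_zero _).2 fun u hu ↦ ?_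
    refine eq_zero_of_vecMul_eq_zero hdet.ne_zero (dotProduct_eq_zero _ fun v ↦ ?_)
    rw [← dotProduct_mulVec]
    exact DFunLike.congr_fun hu ![v]
  simpa using lift_rank_range_of_injective _ hinj

end MatrixForms

theorem stdSymplecticMatrix_eq_neg_J (n : ℕ) : stdSymplecticMatrix n = -J (Fin n) ℝ := by
  simp [stdSymplecticMatrix, J, fromBlocks_neg]

theorem stdSymplecticMatrix_transpose (n : ℕ) :
    (stdSymplecticMatrix n)ᵀ = -stdSymplecticMatrix n := by
  simp [stdSymplecticMatrix_eq_neg_J, J_transpose]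

theorem isUnit_det_stdSymplecticMatrix (n : ℕ) : IsUnit (stdSymplecticMatrix n).det := by
  simpa [stdSymplecticMatrix_eq_neg_J, det_neg] using isUnit_det_J (Fin n) ℝ

theorem two_lt_rank_stdSymplecticForm {n : ℕ} (hn : 2 ≤ n) :
    2 < (twoFormOfSkew _ (stdSymplecticMatrix_transpose n)).curryLeft.toLinearMap.rank := by
  rw [rank_curryLeft_twoFormOfSkew _ (isUnit_det_stdSymplecticMatrix n)]
  norm_cast
  simp only [Fintype.card_sum, Fintype.card_fin]
  lia

/-- Constancy of the conformal factor in dimension at least 4: if `f : ℝ^{2n} → ℝ^{2n}`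
(`n ≥ 2`) is `C²` with everywhere invertible derivative `Df`, and
`Df(x)ᵀ J Df(x) = λ(x) J` for a function `λ`, then `λ` is constant. -/
theorem conformal_factor_constant (n : ℕ) (hn : 2 ≤ n)
    (f : ((Fin n ⊕ Fin n) → ℝ) → ((Fin n ⊕ Fin n) → ℝ)) (hf : ContDiff ℝ 2 f)
    (Df : ((Fin n ⊕ Fin n) → ℝ) → Matrix (Fin n ⊕ Fin n) (Fin n ⊕ Fin n) ℝ)
    (hDf : ∀ x, HasFDerivAt f (LinearMap.toContinuousLinearMap (Df x).mulVecLin) x)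
    (hDfinv : ∀ x, IsUnit (Df x))
    (lam : ((Fin n ⊕ Fin n) → ℝ) → ℝ)
    (hconf : ∀ x, (Df x)ᵀ * stdSymplecticMatrix n * Df x = lam x • stdSymplecticMatrix n) :
    ∀ x y, lam x = lam y := by
  let Ω := twoFormOfSkew _ (stdSymplecticMatrix_transpose n)
  have hpullback (x : Fin n ⊕ Fin n → ℝ) :
      Ω.compContinuousLinearMap (fderiv ℝ f x) = lam x • Ω := by
    rw [(hDf x).fderiv]
    exact twoFormOfSkew_compContinuousLinearMap_eq_smul _ _ (hconf x)
  have hconst := conformal_factor_constant_general (lam := lam) (ω := fun _ ↦ Ω) (η := fun _ ↦ Ω)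
    isOpen_univ isPreconnected_univ hf.contDiffOn (fun _ _ ↦ differentiableAt_const Ω)
    (fun x _ ↦ extDeriv_const Ω x) (fun _ _ ↦ two_lt_rank_stdSymplecticForm hn)
    (fun _ _ ↦ differentiableAt_const Ω) (fun x _ ↦ extDeriv_const Ω (f x))
    (fun x _ ↦ hpullback x)
  exact fun x y ↦ hconst x trivial y trivial
end

section
/- For every eccentricity e with 0 ≤ e < 1, let u_e : ℝ → ℝ denote the inverse of the Kepler map t_e(u) := u − e·sin u. Then the time averages over one orbital period of the tidal factors of the spin-orbit problem equal the averaged coefficients: ∫₀^{2π} (1 − e·cos(u_e(t)))^(−6) dt = 2π·L̄(e) and ∫₀^{2π} √(1 − e²)·(1 − e·cos(u_e(t)))^(−8) dt = 2π·N̄(e); in particular, the volume contraction of the non-averaged spin-orbit flow over one period, exp(−μ·∫₀^{2π}(a/r(t))⁶ dt), coincides with that of the averaged flow, exp(−μ·L̄(e)·2π), for every μ. -/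
open Real

/-- The averaged tidal coefficient `L̄(e) = (1 + 3e² + (3/8)e⁴)/(1-e²)^{9/2}`. -/
noncomputable def Lbar (e : ℝ) : ℝ :=
  (1 + 3 * e ^ 2 + (3 / 8) * e ^ 4) / (1 - e ^ 2) ^ ((9 : ℝ) / 2)

/-- The averaged tidal coefficient
`N̄(e) = (1 + (15/2)e² + (45/8)e⁴ + (5/16)e⁶)/(1-e²)⁶`. -/
noncomputable def Nbar (e : ℝ) : ℝ :=
  (1 + (15 / 2) * e ^ 2 + (45 / 8) * e ^ 4 + (5 / 16) * e ^ 6) / (1 - e ^ 2) ^ 6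

/-!
The true anomaly `f` satisfies `1 + e cos f = (1 - e²)/(1 - e cos u)` and
`df = √(1 - e²)/(1 - e cos u) du`, while `dt = (1 - e cos u) du`. Passing from the time `t` to the
eccentric anomaly `u` and then to `f` therefore turns `∫ (a/r)ⁿ⁺² dt` into
`(1 - e²)^(-(n + 1/2)) ∫ (1 + e cos f)ⁿ df`, the integral of a trigonometric polynomial. Both tidal
factors are instances, with `n = 4` and `n = 6`.
-/

section CosineMoments

lemma integral_cos_pow_two_mul (k : ℕ) :
    ∫ x in (0 : ℝ)..(2 * π), cos x ^ (2 * k) = 2 * π * (k.centralBinom / 4 ^ k) := by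
  induction k with
  | zero => simp
  | succ k ih =>
    have hrec : ((k : ℝ) + 1) * (k + 1).centralBinom = 2 * (2 * k + 1) * k.centralBinom :=
      mod_cast k.succ_mul_centralBinom_succ
    rw [mul_add_one, integral_cos_pow, ih]
    simp only [sin_two_pi, sin_zero, mul_zero, sub_zero, zero_div, zero_add, pow_succ]
    push_cast
    field_simp
    linear_combination -2 * hrec

lemma integral_cos_pow_two_mul_add_one (k : ℕ) :
    ∫ x in (0 : ℝ)..(2 * π), cos x ^ (2 * k + 1) = 0 := by
  induction k with
  | zero => simp
  | succ k ih =>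
    rw [show 2 * (k + 1) + 1 = 2 * k + 1 + 2 by ring, integral_cos_pow, ih]
    simp

lemma integral_one_add_mul_cos_pow (e : ℝ) (n : ℕ) :
    ∫ x in (0 : ℝ)..(2 * π), (1 + e * cos x) ^ n =
      2 * π * ∑ k ∈ Finset.range (n / 2 + 1),
        (n.choose (2 * k) : ℝ) * k.centralBinom * (e / 2) ^ (2 * k) := by
  have hexpand : ∫ x in (0 : ℝ)..(2 * π), (1 + e * cos x) ^ n =
      ∑ m ∈ Finset.range (n + 1), n.choose m * e ^ m * ∫ x in (0 : ℝ)..(2 * π), cos x ^ m := by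
    simp_rw [add_comm (1 : ℝ), add_pow, one_pow, mul_one, mul_pow]
    rw [intervalIntegral.integral_finsetSum
      fun m _ => (by fun_prop : Continuous _).intervalIntegrable _ _]
    refine Finset.sum_congr rfl fun m _ => ?_
    rw [← intervalIntegral.integral_const_mul]
    congr with x
    ring
  rw [hexpand, Finset.mul_sum]
  refine (Finset.sum_of_injOn (2 * ·) (fun _ _ _ _ h => by simpa using h)
    (fun k hk => ?_) (fun m hm hodd => ?_) (fun k _ => ?_)).symm
  · simp only [Finset.coe_range, Set.mem_Iio] at hk ⊢
    omega
  · obtain ⟨k, rfl | rfl⟩ := m.even_or_odd'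
    · exact (hodd ⟨k, by simp only [Finset.coe_range, Set.mem_Iio, Finset.mem_range] at hm ⊢; omega,
        rfl⟩).elim
    · rw [integral_cos_pow_two_mul_add_one, mul_zero]
  · rw [integral_cos_pow_two_mul, div_pow, pow_mul 2]
    ring

end CosineMoments

section MobiusAngle

lemma one_sub_mul_cos_pos {e : ℝ} (he : |e| < 1) (u : ℝ) : 0 < 1 - e * cos u := by
  have : |e * cos u| < 1 := by
    rw [abs_mul]
    exact mul_lt_one_of_nonneg_of_lt_one_left (abs_nonneg e) he (abs_cos_le_one u)
  linarith [le_abs_self (e * cos u)]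

lemma hasDerivAt_one_sub_mul_cos (e u : ℝ) :
    HasDerivAt (fun u => 1 - e * cos u) (e * sin u) u :=
  (((hasDerivAt_cos u).const_mul e).const_sub 1).congr_deriv (by ring)

lemma cos_two_mul_arctan_div {x : ℝ} (hx : x ≠ 0) (y : ℝ) :
    cos (2 * arctan (y / x)) = (x ^ 2 - y ^ 2) / (x ^ 2 + y ^ 2) := by
  rw [cos_two_mul, cos_sq_arctan]
  field_simp
  ring

lemma sin_two_mul_arctan_div {x : ℝ} (hx : x ≠ 0) (y : ℝ) :
    sin (2 * arctan (y / x)) = 2 * x * y / (x ^ 2 + y ^ 2) := by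
  rw [sin_two_mul, sin_arctan, cos_arctan, mul_assoc, div_mul_div_comm,
    mul_self_sqrt (by positivity)]
  field_simp

/-- The angle by which the disc automorphism `z ↦ (z - b)/(1 - b z)` acts on the unit circle, for
`-1 < b < 1`: the argument of the image of `exp (i u)`, chosen continuously in `u` and vanishing at
`u = 0`. -/
noncomputable def mobiusAngle (b u : ℝ) : ℝ :=
  u + 2 * arctan (b * sin u / (1 - b * cos u))

@[simp]
lemma mobiusAngle_zero (b : ℝ) : mobiusAngle b 0 = 0 := by
  simp [mobiusAngle]

@[simp]
lemma mobiusAngle_two_pi (b : ℝ) : mobiusAngle b (2 * π) = 2 * π := by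
  simp [mobiusAngle]

lemma one_sub_mul_cos_sq_add_mul_sin_sq (b u : ℝ) :
    (1 - b * cos u) ^ 2 + (b * sin u) ^ 2 = 1 + b ^ 2 - 2 * b * cos u := by
  linear_combination b ^ 2 * sin_sq_add_cos_sq u

lemma one_add_sq_sub_two_mul_cos_pos {b : ℝ} (hb : |b| < 1) (u : ℝ) :
    0 < 1 + b ^ 2 - 2 * b * cos u := by
  have := one_sub_mul_cos_pos hb u
  rw [← one_sub_mul_cos_sq_add_mul_sin_sq]
  positivity

lemma hasDerivAt_mobiusAngle {b : ℝ} (hb : |b| < 1) (u : ℝ) :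
    HasDerivAt (mobiusAngle b) ((1 - b ^ 2) / (1 + b ^ 2 - 2 * b * cos u)) u := by
  have hne := (one_sub_mul_cos_pos hb u).ne'
  have hker := (one_add_sq_sub_two_mul_cos_pos hb u).ne'
  have hquot : HasDerivAt (fun u => b * sin u / (1 - b * cos u))
      ((b * cos u - b ^ 2) / (1 - b * cos u) ^ 2) u := by
    refine (((hasDerivAt_sin u).const_mul b).div
      (hasDerivAt_one_sub_mul_cos b u) hne).congr_deriv ?_
    congr 1
    linear_combination -b ^ 2 * sin_sq_add_cos_sq u
  refine ((hasDerivAt_id u).add (hquot.arctan.const_mul 2)).congr_deriv ?_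
  have hsq : 1 + (b * sin u / (1 - b * cos u)) ^ 2 =
      (1 + b ^ 2 - 2 * b * cos u) / (1 - b * cos u) ^ 2 := by
    rw [← one_sub_mul_cos_sq_add_mul_sin_sq]
    field_simp
  rw [hsq]
  field_simp
  ring

lemma cos_mobiusAngle {b : ℝ} (hb : |b| < 1) (u : ℝ) :
    cos (mobiusAngle b u) =
      ((1 + b ^ 2) * cos u - 2 * b) / (1 + b ^ 2 - 2 * b * cos u) := by
  have hne := (one_sub_mul_cos_pos hb u).ne'
  rw [mobiusAngle, cos_add, cos_two_mul_arctan_div hne, sin_two_mul_arctan_div hne,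
    one_sub_mul_cos_sq_add_mul_sin_sq, mul_div_assoc', mul_div_assoc', div_sub_div_same]
  congr 1
  linear_combination (-(b ^ 2 * cos u) - 2 * b * (1 - b * cos u)) * sin_sq_add_cos_sq u

end MobiusAngle

section TrueAnomaly

/-- The ratio `e / (1 + √(1 - e²))`, traditionally written `β`: the parameter of the disc
automorphism that carries the eccentric anomaly to the true anomaly. -/
noncomputable def anomalyRatio (e : ℝ) : ℝ :=
  e / (1 + √(1 - e ^ 2))

/-- The true anomaly as a function of the eccentricity `e` and the eccentric anomaly `u`. The
arctangent in `mobiusAngle` makes it smooth on the whole line, unlike the formula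
`2 arctan (√((1 + e)/(1 - e)) tan (u/2))`, which jumps at odd multiples of `π`. -/
noncomputable def trueAnomaly (e u : ℝ) : ℝ :=
  mobiusAngle (anomalyRatio e) u

variable {e : ℝ}

lemma one_sub_sq_pos (he : |e| < 1) : 0 < 1 - e ^ 2 :=
  sub_pos.2 ((sq_lt_one_iff_abs_lt_one e).2 he)

lemma abs_anomalyRatio_lt_one (he : |e| < 1) : |anomalyRatio e| < 1 := by
  have hr : 0 < √(1 - e ^ 2) := sqrt_pos.2 (one_sub_sq_pos he)
  rw [anomalyRatio, abs_div, abs_of_pos (by positivity : 0 < 1 + √(1 - e ^ 2)),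
    div_lt_one (by positivity)]
  linarith

lemma one_sub_anomalyRatio_sq (he : |e| < 1) :
    1 - anomalyRatio e ^ 2 = √(1 - e ^ 2) * (1 + anomalyRatio e ^ 2) := by
  have hr : √(1 - e ^ 2) ^ 2 = 1 - e ^ 2 := sq_sqrt (one_sub_sq_pos he).le
  rw [anomalyRatio]
  field_simp
  linear_combination -(1 + √(1 - e ^ 2)) * hr

lemma two_mul_anomalyRatio (he : |e| < 1) :
    2 * anomalyRatio e = e * (1 + anomalyRatio e ^ 2) := by
  have hr : √(1 - e ^ 2) ^ 2 = 1 - e ^ 2 := sq_sqrt (one_sub_sq_pos he).le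
  rw [anomalyRatio]
  field_simp
  linear_combination -e * hr

lemma one_add_anomalyRatio_sq_sub (he : |e| < 1) (u : ℝ) :
    1 + anomalyRatio e ^ 2 - 2 * anomalyRatio e * cos u =
      (1 + anomalyRatio e ^ 2) * (1 - e * cos u) := by
  linear_combination -cos u * two_mul_anomalyRatio he

lemma hasDerivAt_trueAnomaly (he : |e| < 1) (u : ℝ) :
    HasDerivAt (trueAnomaly e) (√(1 - e ^ 2) / (1 - e * cos u)) u := by
  refine (hasDerivAt_mobiusAngle (abs_anomalyRatio_lt_one he) u).congr_deriv ?_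
  rw [one_sub_anomalyRatio_sq he, one_add_anomalyRatio_sq_sub he, mul_comm,
    mul_div_mul_left _ _ (by positivity)]

lemma cos_trueAnomaly (he : |e| < 1) (u : ℝ) :
    cos (trueAnomaly e u) = (cos u - e) / (1 - e * cos u) := by
  rw [trueAnomaly, cos_mobiusAngle (abs_anomalyRatio_lt_one he),
    one_add_anomalyRatio_sq_sub he, two_mul_anomalyRatio he, mul_comm e, ← mul_sub,
    mul_div_mul_left _ _ (by positivity)]

lemma one_add_mul_cos_trueAnomaly (he : |e| < 1) (u : ℝ) :
    1 + e * cos (trueAnomaly e u) = (1 - e ^ 2) / (1 - e * cos u) := by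
  have := (one_sub_mul_cos_pos he u).ne'
  rw [cos_trueAnomaly he]
  field_simp
  ring

lemma integral_inv_one_sub_mul_cos_pow (he : |e| < 1) (n : ℕ) (a b : ℝ) :
    ∫ u in a..b, ((1 - e * cos u) ^ (n + 1))⁻¹ =
      (∫ f in trueAnomaly e a..trueAnomaly e b, (1 + e * cos f) ^ n) /
        √(1 - e ^ 2) ^ (2 * n + 1) := by
  have hs := one_sub_sq_pos he
  have hne : ∀ u, 1 - e * cos u ≠ 0 := fun u => (one_sub_mul_cos_pos he u).ne'
  rw [eq_div_iff (pow_pos (sqrt_pos.2 hs) _).ne', ← intervalIntegral.integral_comp_mul_deriv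
      (fun u _ => hasDerivAt_trueAnomaly he u)
      (Continuous.div (by fun_prop) (by fun_prop) hne).continuousOn (by fun_prop),
    ← intervalIntegral.integral_mul_const]
  refine intervalIntegral.integral_congr fun u _ => ?_
  simp only [Function.comp_apply, one_add_mul_cos_trueAnomaly he]
  rw [div_pow, pow_succ √(1 - e ^ 2), pow_mul, sq_sqrt hs.le, div_mul_div_comm, ← pow_succ,
    inv_mul_eq_div]

end TrueAnomaly

section KeplerMap

/-- The Kepler map `u ↦ u - e sin u`, sending the eccentric anomaly to the time (mean anomaly). -/
noncomputable def keplerMap (e u : ℝ) : ℝ :=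
  u - e * sin u

variable {e : ℝ} {uinv : ℝ → ℝ}

lemma hasDerivAt_keplerMap (e u : ℝ) : HasDerivAt (keplerMap e) (1 - e * cos u) u :=
  (hasDerivAt_id u).sub ((hasDerivAt_sin u).const_mul e)

lemma strictMono_keplerMap (he : |e| < 1) : StrictMono (keplerMap e) :=
  strictMono_of_deriv_pos fun u => by
    rw [(hasDerivAt_keplerMap e u).deriv]
    exact one_sub_mul_cos_pos he u

lemma continuous_of_rightInverse_keplerMap (he : |e| < 1)
    (huinv : Function.RightInverse uinv (keplerMap e)) : Continuous uinv :=
  ((strictMono_keplerMap he).orderIsoOfRightInverse _ uinv huinv).symm.continuous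

lemma integral_comp_keplerMap_rightInverse (he : |e| < 1)
    (huinv : Function.RightInverse uinv (keplerMap e)) {g : ℝ → ℝ} (hg : Continuous g) (a b : ℝ) :
    ∫ t in keplerMap e a..keplerMap e b, g (uinv t) = ∫ u in a..b, g u * (1 - e * cos u) := by
  have hleft : Function.LeftInverse uinv (keplerMap e) :=
    huinv.leftInverse_of_injective (strictMono_keplerMap he).injective
  rw [← intervalIntegral.integral_comp_mul_deriv (fun u _ => hasDerivAt_keplerMap e u)
    (by fun_prop) (g := fun t => g (uinv t))
    (hg.comp (continuous_of_rightInverse_keplerMap he huinv))]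
  simp only [Function.comp_apply, hleft _]

lemma integral_one_sub_mul_cos_keplerMap_inverse_zpow (he : |e| < 1)
    (huinv : Function.RightInverse uinv (keplerMap e)) (n : ℕ) :
    ∫ t in (0 : ℝ)..(2 * π), (1 - e * cos (uinv t)) ^ (-(n + 2) : ℤ) =
      2 * π * (∑ k ∈ Finset.range (n / 2 + 1),
        (n.choose (2 * k) : ℝ) * k.centralBinom * (e / 2) ^ (2 * k)) /
          √(1 - e ^ 2) ^ (2 * n + 1) := by
  have hne : ∀ u, 1 - e * cos u ≠ 0 := fun u => (one_sub_mul_cos_pos he u).ne'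
  calc ∫ t in (0 : ℝ)..(2 * π), (1 - e * cos (uinv t)) ^ (-(n + 2) : ℤ)
      = ∫ t in keplerMap e 0..keplerMap e (2 * π),
          (1 - e * cos (uinv t)) ^ (-(n + 2) : ℤ) := by simp [keplerMap]
    _ = ∫ u in (0 : ℝ)..(2 * π), (1 - e * cos u) ^ (-(n + 2) : ℤ) * (1 - e * cos u) :=
        integral_comp_keplerMap_rightInverse he huinv
          (g := fun u => (1 - e * cos u) ^ (-(n + 2) : ℤ))
          (Continuous.zpow₀ (by fun_prop) _ fun u => .inl (hne u)) 0 (2 * π)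
    _ = ∫ u in (0 : ℝ)..(2 * π), ((1 - e * cos u) ^ (n + 1))⁻¹ := by
        refine intervalIntegral.integral_congr fun u _ => ?_
        simp only [← zpow_add_one₀ (hne u), ← zpow_natCast, ← zpow_neg]
        push_cast
        ring_nf
    _ = _ := by
        simp only [integral_inv_one_sub_mul_cos_pow he, trueAnomaly, mobiusAngle_zero,
          mobiusAngle_two_pi, integral_one_add_mul_cos_pow]

end KeplerMap

section TidalCoefficients

variable {e : ℝ}

lemma Lbar_eq_div_sqrt_pow (he : |e| < 1) :
    Lbar e = (1 + 3 * e ^ 2 + (3 / 8) * e ^ 4) / √(1 - e ^ 2) ^ 9 := by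
  rw [Lbar, rpow_div_two_eq_sqrt _ (one_sub_sq_pos he).le]
  norm_cast

lemma Nbar_eq_sqrt_mul_div_sqrt_pow (he : |e| < 1) :
    Nbar e = √(1 - e ^ 2) *
      ((1 + (15 / 2) * e ^ 2 + (45 / 8) * e ^ 4 + (5 / 16) * e ^ 6) / √(1 - e ^ 2) ^ 13) := by
  have hs := one_sub_sq_pos he
  have hr : 0 < √(1 - e ^ 2) := sqrt_pos.2 hs
  rw [Nbar, ← mul_div_assoc, pow_succ' √(1 - e ^ 2) 12, mul_div_mul_left _ _ hr.ne',
    show 12 = 2 * 6 from rfl, pow_mul √(1 - e ^ 2), sq_sqrt hs.le]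

end TidalCoefficients

theorem averaged_tidal_coefficients_general {e : ℝ} (he : |e| < 1) {uinv : ℝ → ℝ}
    (huinv : Function.RightInverse uinv (keplerMap e)) :
    (∫ t in (0 : ℝ)..(2 * π), (1 - e * cos (uinv t)) ^ (-6 : ℤ) = 2 * π * Lbar e) ∧
    (∫ t in (0 : ℝ)..(2 * π), √(1 - e ^ 2) * (1 - e * cos (uinv t)) ^ (-8 : ℤ) =
      2 * π * Nbar e) ∧
    (∀ μ : ℝ,
      exp (-μ * ∫ t in (0 : ℝ)..(2 * π), (1 - e * cos (uinv t)) ^ (-6 : ℤ)) =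
        exp (-μ * Lbar e * (2 * π))) := by
  have hL : ∫ t in (0 : ℝ)..(2 * π), (1 - e * cos (uinv t)) ^ (-6 : ℤ) = 2 * π * Lbar e := by
    refine (integral_one_sub_mul_cos_keplerMap_inverse_zpow he huinv 4).trans ?_
    norm_num [Finset.sum_range_succ, Nat.choose, Nat.centralBinom, Lbar_eq_div_sqrt_pow he]
    ring
  have hN : ∫ t in (0 : ℝ)..(2 * π), √(1 - e ^ 2) * (1 - e * cos (uinv t)) ^ (-8 : ℤ) =
      2 * π * Nbar e := by
    rw [intervalIntegral.integral_const_mul, Nbar_eq_sqrt_mul_div_sqrt_pow he, mul_left_comm]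
    congr 1
    refine (integral_one_sub_mul_cos_keplerMap_inverse_zpow he huinv 6).trans ?_
    norm_num [Finset.sum_range_succ, Nat.choose, Nat.centralBinom]
    ring
  refine ⟨hL, hN, fun μ => ?_⟩
  rw [hL]
  ring_nf

/-- The time averages over one orbital period of the tidal factors of the spin-orbit
problem equal the averaged coefficients: with `u_e` the inverse of the Kepler map
`t_e(u) = u - e sin u`, one has `∫₀^{2π} (1 - e cos u_e(t))⁻⁶ dt = 2π L̄(e)` and
`∫₀^{2π} √(1-e²) (1 - e cos u_e(t))⁻⁸ dt = 2π N̄(e)`; in particular the volume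
contraction over a period of the non-averaged flow coincides with that of the
averaged flow for every dissipation `μ`. -/
theorem averaged_tidal_coefficients (e : ℝ) (h0 : 0 ≤ e) (h1 : e < 1)
    (uinv : ℝ → ℝ)
    (hleft : Function.LeftInverse uinv (fun u : ℝ => u - e * Real.sin u))
    (hright : Function.RightInverse uinv (fun u : ℝ => u - e * Real.sin u)) :
    (∫ t in (0 : ℝ)..(2 * π), (1 - e * Real.cos (uinv t)) ^ (-6 : ℤ) = 2 * π * Lbar e) ∧
    (∫ t in (0 : ℝ)..(2 * π),
        Real.sqrt (1 - e ^ 2) * (1 - e * Real.cos (uinv t)) ^ (-8 : ℤ) =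
      2 * π * Nbar e) ∧
    (∀ μ : ℝ,
      Real.exp (-μ * ∫ t in (0 : ℝ)..(2 * π), (1 - e * Real.cos (uinv t)) ^ (-6 : ℤ)) =
        Real.exp (-μ * Lbar e * (2 * π))) := by
  exact averaged_tidal_coefficients_general (abs_lt.2 ⟨by linarith, h1⟩) hright
end
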